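/- Let b_4 : ℕ → {0,1,2,3} be the fixed point starting with 0 of the morphism 0 ↦ 01, 1 ↦ 21, 2 ↦ 03, 3 ↦ 23, and let g_2 be the 19-uniform morphism from {0,1,2,3}* to {0,1}* defined by g_2(0) = 0000101001110110100, g_2(1) = 0011100010100111101, g_2(2) = 0000111100010110100, g_2(3) = 0011110110100111101. Then the infinite binary word g_2(b_4) avoids every circular formula C_i with i ≥ 4. -/

import Mathlib

/-- `u` is a factor of the infinite word `x`. -/
def IsFactorOfInf {α : Type*} (u : List α) (x : ℕ → α) : Prop :=
  ∃ i : ℕ, u = (List.range u.length).map fun j => x (i + j)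

/-- The `i`-th fragment `A_i A_{i+1} … A_{i+t}` of the circular formula `C_t`,
as the list of variable indices (taken modulo `t`), of length `t + 1`. -/
def circFragment (t i : ℕ) : List ℕ :=
  (List.range (t + 1)).map fun j => (i + j) % t

/-- `h` is an occurrence of the circular formula `C_t` in the infinite word `x`:
`h` assigns a nonempty word to each of the `t` variables, and the `h`-image of
every fragment of `C_t` is a factor of `x`. -/
def CircOcc {α : Type*} (t : ℕ) (h : ℕ → List α) (x : ℕ → α) : Prop :=
  (∀ v < t, h v ≠ []) ∧ ∀ i < t, IsFactorOfInf ((circFragment t i).flatMap h) x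

/-- The morphism `0 ↦ 01, 1 ↦ 21, 2 ↦ 03, 3 ↦ 23` whose fixed point
starting with `0` is `b₄`. -/
def mb4 : Fin 4 → List (Fin 4) := ![[0, 1], [2, 1], [0, 3], [2, 3]]

/-- The 19-uniform morphism `g₂ : {0,1,2,3}* → {0,1}*`. -/
def g2 : Fin 4 → List (Fin 2) :=
  ![[0, 0, 0, 0, 1, 0, 1, 0, 0, 1, 1, 1, 0, 1, 1, 0, 1, 0, 0],
    [0, 0, 1, 1, 1, 0, 0, 0, 1, 0, 1, 0, 0, 1, 1, 1, 1, 0, 1],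
    [0, 0, 0, 0, 1, 1, 1, 1, 0, 0, 0, 1, 0, 1, 1, 0, 1, 0, 0],
    [0, 0, 1, 1, 1, 1, 0, 1, 1, 0, 1, 0, 0, 1, 1, 1, 1, 0, 1]]

/-!
Reading the images of the variables letter by letter turns an occurrence of `C_t` into an occurrence
of some `C_L`, `L ≥ t`, whose variables are mapped to single letters: a periodic word `c` of period
`L` all of whose windows of length `L + 1` are factors. If the factors of length `L` determine their
positions modulo `m`, then the positions of these windows advance by one modulo `m` while `c` is
traversed, so `m ∣ L`. In `b₄` the factors of length `2 ^ k` determine their positions modulo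
`2 ^ (k + 1)`, and in `g₂(b₄)` the factors of length `14` determine theirs modulo `19`. Hence
`L ≥ 14` is of the form `19 * n`, and for `2 ^ k ≤ n < 2 ^ (k + 1)` the two facts combine to
`19 * 2 ^ (k + 1) ∣ 19 * n`, which is absurd. The lengths `4 ≤ L < 14` are excluded by a finite
search.
-/

section Window

variable {α : Type*}

/-- The factor of length `n` of the infinite word `x` that starts at position `p`. -/
def window (x : ℕ → α) (p n : ℕ) : List α :=
  (List.range n).map fun k => x (p + k)

@[simp]
theorem length_window (x : ℕ → α) (p n : ℕ) : (window x p n).length = n := by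
  simp [window]

@[simp]
theorem getElem_window (x : ℕ → α) (p n k : ℕ) (hk : k < (window x p n).length) :
    (window x p n)[k] = x (p + k) := by
  simp [window]

theorem eq_window_iff {x : ℕ → α} {p n : ℕ} {u : List α} (hu : u.length = n) :
    u = window x p n ↔ ∀ k (hk : k < u.length), u[k] = x (p + k) := by
  simp [List.ext_getElem_iff, hu]

theorem window_eq_window_iff {x y : ℕ → α} {p q n : ℕ} :
    window x p n = window y q n ↔ ∀ k < n, x (p + k) = y (q + k) := by
  simp [eq_window_iff]

theorem window_add (x : ℕ → α) (p m n : ℕ) :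
    window x p (m + n) = window x p m ++ window x (p + m) n := by
  simp [window, List.range_add, Function.comp_def, add_assoc]

@[simp]
theorem take_window (x : ℕ → α) (p l n : ℕ) : (window x p n).take l = window x p (min l n) := by
  rw [eq_window_iff (by simp)]
  simp

@[simp]
theorem drop_window (x : ℕ → α) (p a n : ℕ) : (window x p n).drop a = window x (p + a) (n - a) := by
  rw [eq_window_iff (by simp)]
  simp [add_assoc]

theorem take_drop_window (x : ℕ → α) (p : ℕ) {a l n : ℕ} (h : a + l ≤ n) :
    ((window x p n).drop a).take l = window x (p + a) l := by
  rw [drop_window, take_window, min_eq_left (by omega)]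

theorem window_eq_window_of_le {x y : ℕ → α} {p q n a l : ℕ}
    (h : window x p n = window y q n) (hl : a + l ≤ n) :
    window x (p + a) l = window y (q + a) l := by
  rw [← take_drop_window x p hl, h, take_drop_window y q hl]

theorem window_add_period {c : ℕ → α} {L : ℕ} (hc : Function.Periodic c L)
    (p n : ℕ) : window c (p + L) n = window c p n :=
  window_eq_window_iff.2 fun k _ => by rw [add_right_comm, hc]

end Window

section Occurrence

variable {α : Type*}

/-- An occurrence of the circular formula `C_L` in `x` whose variables are mapped to single
letters. The images of the variables are `c 0, …, c (L - 1)`, repeated periodically, so the images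
of the fragments are the windows of length `L + 1` of `c`. -/
structure IsLetterOcc (x : ℕ → α) (L : ℕ) (c : ℕ → α) : Prop where
  periodic : Function.Periodic c L
  exists_window_eq : ∀ p, ∃ q, window x q (L + 1) = window c p (L + 1)

/-- The word `H 0 H 1 … H (n - 1)`. -/
def concat (H : ℕ → List α) (n : ℕ) : List α :=
  (List.range n).flatMap H

theorem concat_add (H : ℕ → List α) (m n : ℕ) :
    concat H (m + n) = concat H m ++ concat (fun j => H (m + j)) n := by
  simp [concat, List.range_add, List.flatMap_map]

theorem concat_succ (H : ℕ → List α) (n : ℕ) : concat H (n + 1) = concat H n ++ H n := by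
  simp [concat, List.range_succ]

theorem le_length_concat {H : ℕ → List α} (hH : ∀ j, H j ≠ []) (n : ℕ) :
    n ≤ (concat H n).length := by
  induction n with
  | zero => exact Nat.zero_le _
  | succ n ih =>
    have hpos := List.length_pos_iff.2 (hH n)
    rw [concat_succ, List.length_append]
    omega

theorem exists_concat_eq_window {H : ℕ → List α} (hH : ∀ j, H j ≠ []) :
    ∃ c : ℕ → α, ∀ n, concat H n = window c 0 (concat H n).length := by
  have hlen := le_length_concat hH
  refine ⟨fun k => (concat H (k + 1))[k]'(hlen (k + 1)), fun n => (eq_window_iff rfl).2 ?_⟩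
  have hprefix : ∀ {m n}, m ≤ n → concat H m <+: concat H n := by
    intro m n hmn
    obtain ⟨d, rfl⟩ := Nat.exists_eq_add_of_le hmn
    simp [concat_add]
  intro k hk
  simp only [zero_add]
  rcases le_total n (k + 1) with h | h
  · exact (hprefix h).getElem hk
  · exact ((hprefix h).getElem (hlen (k + 1))).symm

theorem exists_length_concat_le_lt {H : ℕ → List α} (hH : ∀ j, H j ≠ []) (p : ℕ) :
    ∃ i, (concat H i).length ≤ p ∧ p < (concat H (i + 1)).length := by
  have hex : ∃ n, p < (concat H n).length := ⟨p + 1, le_length_concat hH (p + 1)⟩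
  have hpos : 0 < Nat.find hex := (Nat.find_pos hex).2 (by simp [concat])
  refine ⟨Nat.find hex - 1, not_lt.1 (Nat.find_min hex (by omega)), ?_⟩
  rw [Nat.sub_add_cancel hpos]
  exact Nat.find_spec hex

theorem isFactorOfInf_iff {x : ℕ → α} {u : List α} :
    IsFactorOfInf u x ↔ ∃ q, window x q u.length = u :=
  exists_congr fun _ => eq_comm

theorem flatMap_circFragment_mod (t i : ℕ) (h : ℕ → List α) :
    (circFragment t (i % t)).flatMap h = concat (fun j => h ((i + j) % t)) (t + 1) := by
  simp [circFragment, concat, List.flatMap_map]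

/-- With `L` the length of the image of `A_0 ⋯ A_{t-1}`, a window of length `L + 1` that starts in
the image of `A_i` is contained in the image of the fragment `A_i ⋯ A_{i+t}`. -/
theorem CircOcc.exists_isLetterOcc {t : ℕ} {h : ℕ → List α} {x : ℕ → α} (ht : 0 < t)
    (hocc : CircOcc t h x) : ∃ L c, t ≤ L ∧ IsLetterOcc x L c := by
  obtain ⟨hne, hfac⟩ := hocc
  let H : ℕ → List α := fun j => h (j % t)
  have hH : ∀ j, H j ≠ [] := fun j => hne _ (Nat.mod_lt _ ht)
  have hperiod : (fun j => H (t + j)) = H := by simp [H]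
  obtain ⟨c, hc⟩ := exists_concat_eq_window hH
  have hfragment : ∀ i n, concat (fun j => H (i + j)) n =
      window c (concat H i).length (concat (fun j => H (i + j)) n).length := by
    intro i n
    have hi := hc (i + n)
    rwa [concat_add, List.length_append, window_add, ← hc i, zero_add,
      List.append_cancel_left_eq] at hi
  refine ⟨(concat H t).length, c, le_length_concat hH t, fun k => ?_, fun p => ?_⟩
  · have hk := hfragment t (k + 1)
    rw [hperiod, hc (k + 1), length_window, window_eq_window_iff] at hk
    simpa [add_comm] using (hk k (le_length_concat hH (k + 1))).symm
  · obtain ⟨i, hip, hpi⟩ := exists_length_concat_le_lt hH p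
    have hlen : (concat H i).length + (concat (fun j => H (i + j)) (t + 1)).length =
        (concat H t).length + (concat H (i + 1)).length := by
      rw [← List.length_append, ← concat_add, add_left_comm, concat_add, hperiod,
        List.length_append]
    obtain ⟨q, hq⟩ := isFactorOfInf_iff.1 (hfac (i % t) (Nat.mod_lt _ ht))
    rw [flatMap_circFragment_mod] at hq
    change window x q (concat (fun j => H (i + j)) (t + 1)).length = _ at hq
    obtain ⟨d, rfl⟩ := Nat.exists_eq_add_of_le hip
    exact ⟨q + d, window_eq_window_of_le (hq.trans (hfragment i (t + 1))) (by omega)⟩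

end Occurrence

section Synchronization

variable {α β : Type*}

/-- Synchronization: the factors of length `w` of `x` determine their positions modulo `m`. -/
def IsSynchronizing (x : ℕ → α) (w m : ℕ) : Prop :=
  ∀ p q, window x p w = window x q w → p ≡ q [MOD m]

theorem IsSynchronizing.mono {x : ℕ → α} {v w m : ℕ} (hx : IsSynchronizing x v m) (h : v ≤ w) :
    IsSynchronizing x w m := fun p q hpq =>
  hx p q (by simpa using window_eq_window_of_le (a := 0) hpq (by omega))

/-- Consecutive windows of `c` overlap in `L` letters, so their positions in `x` advance by one
modulo `m`; after `L` steps the same window recurs. -/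
theorem IsLetterOcc.dvd_of_isSynchronizing {x c : ℕ → α} {L m : ℕ} (hc : IsLetterOcc x L c)
    (hx : IsSynchronizing x L m) : m ∣ L := by
  choose q hq using hc.exists_window_eq
  have hstep : ∀ p, q p + 1 ≡ q (p + 1) [MOD m] := fun p => hx _ _ <| by
    rw [window_eq_window_of_le (hq p) (by omega)]
    simpa using (window_eq_window_of_le (a := 0) (hq (p + 1)) (by omega)).symm
  have hadvance : ∀ p, q 0 + p ≡ q p [MOD m] := by
    intro p
    induction p with
    | zero => rfl
    | succ p ih => exact (ih.add_right 1).trans (hstep p)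
  have hclosed : q L ≡ q 0 [MOD m] := (hx.mono L.le_succ) _ _ <| by
    rw [hq L, hq 0, ← window_add_period hc.periodic 0, zero_add]
  exact Nat.modEq_zero_iff_dvd.1 (Nat.ModEq.add_left_cancel' (q 0) ((hadvance L).trans hclosed))

/-- The image of the infinite word `y` under the `m`-uniform morphism `g`. The letter `z` is a
junk value, never reached when every `g a` has length `m`. -/
def uniformImage (g : α → List β) (m : ℕ) (z : β) (y : ℕ → α) (n : ℕ) : β :=
  (g (y (n / m))).getD (n % m) z

variable {g : α → List β} {m : ℕ} {z : β} {y : ℕ → α}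

theorem window_uniformImage (hg : ∀ a, (g a).length = m) (i : ℕ) :
    window (uniformImage g m z y) (m * i) m = g (y i) := by
  refine ((eq_window_iff (hg _)).2 fun k hk => ?_).symm
  have hkm : k < m := hg (y i) ▸ hk
  rw [uniformImage, Nat.mul_add_div (by omega), Nat.div_eq_of_lt hkm, add_zero,
    Nat.mul_add_mod, Nat.mod_eq_of_lt hkm, List.getD_eq_getElem]

theorem window_uniformImage_of_add_le (hg : ∀ a, (g a).length = m) {q n : ℕ}
    (hn : q % m + n ≤ m + m) :
    window (uniformImage g m z y) q n =
      ((g (y (q / m)) ++ g (y (q / m + 1))).drop (q % m)).take n := by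
  rw [← window_uniformImage hg, ← window_uniformImage hg, mul_add_one, ← window_add,
    take_drop_window _ _ hn, Nat.div_add_mod]

/-- A window of length `m * n` either contains the last `m - e` letters of `n` consecutive blocks
or the first `e` letters of `n` consecutive blocks. -/
theorem isSynchronizing_uniformImage (hg : ∀ a, (g a).length = m) {e : ℕ}
    (hprefix : Function.Injective fun a => (g a).take e)
    (hsuffix : Function.Injective fun a => (g a).drop e) {n k : ℕ} (hy : IsSynchronizing y n k)
    (hx : IsSynchronizing (uniformImage g m z y) (m * n) m) :
    IsSynchronizing (uniformImage g m z y) (m * n) (m * k) := by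
  rcases m.eq_zero_or_pos with rfl | hm
  · simpa using hx
  intro p q hpq
  obtain ⟨i, r, hr, rfl⟩ : ∃ i r, r < m ∧ p = m * i + r :=
    ⟨p / m, p % m, Nat.mod_lt _ hm, (Nat.div_add_mod p m).symm⟩
  obtain ⟨i', rfl⟩ : ∃ i', q = m * i' + r := by
    refine ⟨q / m, ?_⟩
    conv_lhs => rw [← Nat.div_add_mod q m, ← hx _ _ hpq, Nat.mul_add_mod, Nat.mod_eq_of_lt hr]
  have hblock : ∀ j < n, m * j + m ≤ m * n := fun j hj => Nat.mul_le_mul_left m hj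
  have hdrop : ∀ j < n, (g (y (i + j))).drop r = (g (y (i' + j))).drop r := by
    intro j hj
    have hj' := hblock j hj
    simpa only [← window_uniformImage (z := z) hg, drop_window, mul_add, add_right_comm] using
      window_eq_window_of_le (a := m * j) (l := m - r) hpq (by omega)
  have htake : ∀ j < n, (g (y (i + 1 + j))).take r = (g (y (i' + 1 + j))).take r := by
    intro j hj
    have hj' := hblock j hj
    have hpos : ∀ b, m * (b + 1 + j) = m * b + r + (m * j + (m - r)) := by
      intro b
      rw [mul_add, mul_add_one]
      omega
    simpa only [← window_uniformImage (z := z) hg, take_window, min_eq_left hr.le, hpos] using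
      window_eq_window_of_le (a := m * j + (m - r)) (l := r) hpq (by omega)
  refine Nat.ModEq.add_right r (Nat.ModEq.mul_left' m ?_)
  rcases le_total r e with hre | her
  · refine hy _ _ (window_eq_window_iff.2 fun j hj => hsuffix ?_)
    simpa [hre] using congrArg (List.drop (e - r)) (hdrop j hj)
  · refine Nat.ModEq.add_right_cancel' 1 (hy _ _ (window_eq_window_iff.2 fun j hj => hprefix ?_))
    simpa only [List.take_take, min_eq_left her] using congrArg (List.take e) (htake j hj)

theorem not_isLetterOcc_uniformImage (hg : ∀ a, (g a).length = m) {e : ℕ}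
    (hprefix : Function.Injective fun a => (g a).take e)
    (hsuffix : Function.Injective fun a => (g a).drop e)
    (hy : ∀ k, IsSynchronizing y (2 ^ k) (2 ^ (k + 1))) {w L : ℕ}
    (hx : IsSynchronizing (uniformImage g m z y) w m) (hwL : w ≤ L) (hL : L ≠ 0) (c : ℕ → β) :
    ¬ IsLetterOcc (uniformImage g m z y) L c := by
  intro hc
  have hxL := hx.mono hwL
  obtain ⟨n, rfl⟩ := hc.dvd_of_isSynchronizing hxL
  obtain ⟨hm, hn⟩ := mul_ne_zero_iff.1 hL
  have hyn : IsSynchronizing y n (2 ^ (Nat.log 2 n + 1)) :=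
    (hy _).mono (Nat.pow_log_le_self 2 hn)
  have hdvd : 2 ^ (Nat.log 2 n + 1) ∣ n :=
    Nat.dvd_of_mul_dvd_mul_left (Nat.pos_of_ne_zero hm) <| hc.dvd_of_isSynchronizing <|
      isSynchronizing_uniformImage hg hprefix hsuffix hyn hxL
  exact (Nat.lt_pow_succ_log_self one_lt_two n).not_ge (Nat.le_of_dvd (Nat.pos_of_ne_zero hn) hdvd)

end Synchronization

/-- `b` is a fixed point of the morphism `mb4`, block by block. -/
def IsMb4FixedPoint (b : ℕ → Fin 4) : Prop :=
  ∀ n, [b (2 * n), b (2 * n + 1)] = mb4 (b n)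

namespace IsMb4FixedPoint

variable {b4 : ℕ → Fin 4}

theorem val_two_mul (hb : IsMb4FixedPoint b4) (n : ℕ) :
    (b4 (2 * n)).val = 2 * ((b4 n).val % 2) := by
  have key : ∀ a u v : Fin 4, [u, v] = mb4 a → u.val = 2 * (a.val % 2) := by decide
  exact key _ _ _ (hb n)

theorem val_two_mul_add_one (hb : IsMb4FixedPoint b4) (n : ℕ) :
    (b4 (2 * n + 1)).val = 2 * ((b4 n).val / 2) + 1 := by
  have key : ∀ a u v : Fin 4, [u, v] = mb4 a → v.val = 2 * (a.val / 2) + 1 := by decide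
  exact key _ _ _ (hb n)

theorem val_mod_two (hb : IsMb4FixedPoint b4) (n : ℕ) :
    (b4 n).val % 2 = n % 2 := by
  obtain ⟨m, rfl | rfl⟩ := n.even_or_odd'
  · rw [hb.val_two_mul]
    omega
  · rw [hb.val_two_mul_add_one]
    omega

theorem isSynchronizing (hb : IsMb4FixedPoint b4) (k : ℕ) :
    IsSynchronizing b4 (2 ^ k) (2 ^ (k + 1)) := by
  have hparity := hb.val_mod_two
  induction k with
  | zero =>
    intro p q hpq
    have h0 : b4 p = b4 q := by simpa using window_eq_window_iff.1 hpq 0 (by simp)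
    exact (hparity p).symm.trans (h0 ▸ hparity q)
  | succ k ih =>
    intro p q hpq
    have hk : 0 < 2 ^ k := by positivity
    have hletter : ∀ j < 2 ^ (k + 1), b4 (p + j) = b4 (q + j) := window_eq_window_iff.1 hpq
    rw [pow_succ'] at hletter
    obtain ⟨i, e, he, rfl⟩ : ∃ i e, e < 2 ∧ p = 2 * i + e :=
      ⟨p / 2, p % 2, Nat.mod_lt _ two_pos, (Nat.div_add_mod p 2).symm⟩
    obtain ⟨i', rfl⟩ : ∃ i', q = 2 * i' + e := by
      have h0 : b4 (2 * i + e) = b4 q := hletter 0 (by omega)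
      have := hparity (2 * i + e)
      have := hparity q
      rw [← h0] at this
      exact ⟨q / 2, by omega⟩
    have hmod : i % 2 = i' % 2 := by
      have heven : b4 (2 * (i + e)) = b4 (2 * (i' + e)) := by
        convert hletter e (by omega) using 2 <;> ring
      have := congrArg Fin.val heven
      rw [hb.val_two_mul, hb.val_two_mul, hparity, hparity] at this
      omega
    refine Nat.ModEq.add_right e ?_
    rw [pow_succ']
    refine Nat.ModEq.mul_left' 2 (ih i i' (window_eq_window_iff.2 fun j hj => Fin.ext ?_))
    have hodd : b4 (2 * (i + j) + 1) = b4 (2 * (i' + j) + 1) := by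
      convert hletter (2 * j + 1 - e) (by omega) using 2 <;> omega
    have := congrArg Fin.val hodd
    rw [hb.val_two_mul_add_one, hb.val_two_mul_add_one] at this
    have := hparity (i + j)
    have := hparity (i' + j)
    omega

end IsMb4FixedPoint

section Code

/-- The number whose binary digits, least significant first, are the letters of `u`. Words are
encoded as numbers to make the finite verifications below cheap for the kernel. -/
def code (u : List (Fin 2)) : ℕ :=
  Nat.ofDigits 2 (u.map Fin.val)

theorem code_append (u v : List (Fin 2)) : code (u ++ v) = code u + 2 ^ u.length * code v := by
  simp [code, Nat.ofDigits_append]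

theorem code_take_drop (u : List (Fin 2)) (r n : ℕ) :
    code ((u.drop r).take n) = code u / 2 ^ r % 2 ^ n := by
  have hlt : ∀ v : List (Fin 2), ∀ d ∈ v.map Fin.val, d < 2 := by
    intro v d hd
    obtain ⟨a, -, rfl⟩ := List.mem_map.1 hd
    exact a.isLt
  rw [code, code, Nat.ofDigits_div_pow_eq_ofDigits_drop _ two_pos _ (hlt u), ← List.map_drop,
    Nat.ofDigits_mod_pow_eq_ofDigits_take _ two_pos _ (hlt _), ← List.map_take]

/-- The set of the elements of `l`, as the bits of a number. -/
def bitmask (l : List ℕ) : ℕ :=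
  l.foldr (fun k s => s ||| 2 ^ k) 0

theorem testBit_bitmask {l : List ℕ} {k : ℕ} : (bitmask l).testBit k ↔ k ∈ l := by
  induction l with
  | nil => simp [bitmask]
  | cons a l ih =>
    change (bitmask l ||| 2 ^ a).testBit k ↔ _
    rw [Nat.testBit_or, Bool.or_eq_true, ih, Nat.testBit_two_pow, decide_eq_true_iff,
      List.mem_cons, eq_comm, or_comm]

theorem disjoint_of_bitmask_land_eq_zero {l l' : List ℕ} (h : bitmask l &&& bitmask l' = 0) :
    l.Disjoint l' := by
  intro k hk hk'
  have := congrArg (Nat.testBit · k) h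
  simp [testBit_bitmask.2 hk, testBit_bitmask.2 hk'] at this

end Code

section Image

/-- Pairs of letters of opposite parity, which are the ones that can be adjacent in `b₄`. -/
def adjacentPairs : List (Fin 4 × Fin 4) :=
  (List.finRange 4 ×ˢ List.finRange 4).filter fun ab => ab.1.val % 2 ≠ ab.2.val % 2

/-- The codes of the factors of length `n` of the words `g₂(a) g₂(b)`, with `a` and `b` adjacent,
that start at position `r`. -/
def factorCodesAt (n r : ℕ) : List ℕ :=
  adjacentPairs.map fun ab => code (g2 ab.1 ++ g2 ab.2) / 2 ^ r % 2 ^ n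

/-- The codes of the factors of length `n` at the first `19` positions of the words `g₂(a) g₂(b)`,
with `a` and `b` adjacent; every factor of length `n ≤ 20` of `g₂(b₄)` is one of them. -/
def factorCodes (n : ℕ) : List ℕ :=
  (List.range 19).flatMap (factorCodesAt n)

theorem factorCodesAt_disjoint : ∀ r < 19, ∀ s < r,
    (factorCodesAt 14 r).Disjoint (factorCodesAt 14 s) := by
  have hmask : ∀ r < 19, ∀ s < r,
      bitmask (factorCodesAt 14 r) &&& bitmask (factorCodesAt 14 s) = 0 := by
    decide +kernel
  exact fun r hr s hs => disjoint_of_bitmask_land_eq_zero (hmask r hr s hs)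

/-- If `U` is the code of a word `u` of length `L`, then `U + 2 ^ L * U` is the code of `u u`, whose
factors of length `L + 1` are the images of the fragments of `C_L`. -/
theorem exists_notMem_factorCodes : ∀ L ∈ Finset.Ico 4 14, ∀ U ∈ factorCodes L,
    ∃ i < L, (U + 2 ^ L * U) / 2 ^ i % 2 ^ (L + 1) ∉ factorCodes (L + 1) := by
  simp only [← testBit_bitmask (l := factorCodes (_ + 1))]
  decide +kernel

theorem length_g2 (a : Fin 4) : (g2 a).length = 19 := by
  revert a
  decide

theorem take_six_g2_injective : Function.Injective fun a => (g2 a).take 6 := by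
  decide

theorem drop_six_g2_injective : Function.Injective fun a => (g2 a).drop 6 := by
  decide

variable {b4 : ℕ → Fin 4}

theorem code_window_mem_factorCodesAt (hb : IsMb4FixedPoint b4) {q n : ℕ} (hn : n ≤ 20) :
    code (window (uniformImage g2 19 0 b4) q n) ∈ factorCodesAt n (q % 19) := by
  rw [window_uniformImage_of_add_le length_g2 (by omega), code_take_drop]
  refine List.mem_map.2 ⟨(b4 (q / 19), b4 (q / 19 + 1)), List.mem_filter.2 ⟨?_, ?_⟩, rfl⟩
  · exact List.mem_product.2 ⟨List.mem_finRange _, List.mem_finRange _⟩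
  · rw [decide_eq_true_iff, hb.val_mod_two, hb.val_mod_two]
    omega

theorem isSynchronizing_g2_image (hb : IsMb4FixedPoint b4) :
    IsSynchronizing (uniformImage g2 19 0 b4) 14 19 := by
  intro p q hpq
  have hp := code_window_mem_factorCodesAt hb (q := p) (n := 14) (by norm_num)
  have hq := code_window_mem_factorCodesAt hb (q := q) (n := 14) (by norm_num)
  rcases lt_trichotomy (p % 19) (q % 19) with hlt | heq | hgt
  · exact absurd (hpq ▸ hp) (factorCodesAt_disjoint _ (Nat.mod_lt _ (by norm_num)) _ hlt hq)
  · exact heq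
  · exact absurd (hpq ▸ hq) (factorCodesAt_disjoint _ (Nat.mod_lt _ (by norm_num)) _ hgt hp)

theorem not_isLetterOcc_g2_image_of_lt (hb : IsMb4FixedPoint b4) {L : ℕ} (hL : 4 ≤ L) (hL' : L < 14)
    (c : ℕ → Fin 2) : ¬ IsLetterOcc (uniformImage g2 19 0 b4) L c := by
  intro hc
  have hmem : ∀ p n, n ≤ L + 1 → code (window c p n) ∈ factorCodes n := by
    intro p n hn
    obtain ⟨q, hq⟩ := hc.exists_window_eq p
    have hqn : window _ q n = window c p n := window_eq_window_of_le (a := 0) hq (by omega)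
    rw [← hqn]
    exact List.mem_flatMap.2 ⟨q % 19, List.mem_range.2 (Nat.mod_lt _ (by norm_num)),
      code_window_mem_factorCodesAt hb (by omega)⟩
  have hdouble : window c 0 (L + L) = window c 0 L ++ window c 0 L := by
    rw [window_add, window_add_period hc.periodic]
  obtain ⟨i, hi, hnot⟩ :=
    exists_notMem_factorCodes L (Finset.mem_Ico.2 ⟨hL, hL'⟩) _ (hmem 0 L L.le_succ)
  refine hnot ?_
  have := hmem i (L + 1) le_rfl
  rwa [← zero_add i, ← take_drop_window c 0 (n := L + L) (by omega), code_take_drop, hdouble,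
    code_append, length_window] at this

end Image

/-- If `b₄` is the fixed point starting with `0` of the morphism
`0 ↦ 01, 1 ↦ 21, 2 ↦ 03, 3 ↦ 23`, then the infinite binary word `g₂(b₄)`
avoids every circular formula `C_i` with `i ≥ 4`. -/
theorem stmt_8 (b4 : ℕ → Fin 4) (hb0 : b4 0 = 0)
    (hfix : ∀ n, [b4 (2 * n), b4 (2 * n + 1)] = mb4 (b4 n)) :
    ∀ i, 4 ≤ i →
      ¬ ∃ h : ℕ → List (Fin 2),
          CircOcc i h (fun n => (g2 (b4 (n / 19))).getD (n % 19) 0) := by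
  rintro t ht ⟨h, hocc⟩
  obtain ⟨L, c, htL, hc⟩ := hocc.exists_isLetterOcc (by omega)
  have hb : IsMb4FixedPoint b4 := hfix
  rcases lt_or_ge L 14 with hL | hL
  · exact not_isLetterOcc_g2_image_of_lt hb (ht.trans htL) hL c hc
  · exact not_isLetterOcc_uniformImage length_g2 take_six_g2_injective
      drop_six_g2_injective hb.isSynchronizing (isSynchronizing_g2_image hb) hL (by omega) c hc
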